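/- Let p be an odd prime, Δ an integer not divisible by p, set ε = 1 if the image of Δ in ℤ/pℤ is a square and ε = −1 otherwise, and let k be a natural number. Consider the quadratic form in n = 2k+1 variables B(x₀, x₁, …, x_{2k}) = Δ·x₀² + ∑_{i=1}^{k} x_{2i−1}·x_{2i}. Let t be a nonzero integer with p-adic valuation T, and for a natural number ℓ let X_ℓ = N_ℓ / p^{nℓ}, where N_ℓ is the number of v ∈ (ℤ/p^ℓℤ)^n with B(v) = t̄². Then for every real z with |z| < 1, setting w = z/p^{k+1} and u = z²/p^{2k+1}, the series ∑_{ℓ≥0} z^ℓ · X_ℓ converges with sum ((1 − w²)/((1 − z/p)(1 − u))) · (1 − ((u − ε·w)/(1 − ε·w)) · u^T). -/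

import Mathlib

abbrev VV (k : ℕ) (R : Type) := R × (Fin k → R) × (Fin k → R)

def QQ {k : ℕ} {R : Type} [CommRing R] (Δ : R) (v : VV k R) : R :=
  Δ * v.1 ^ 2 + ∑ i, v.2.1 i * v.2.2 i

/-- Counting preimages of a predicate under an additive map. -/
lemma card_pre {G H : Type} [AddCommGroup G] [AddCommGroup H] [Finite G] [Finite H]
    (f : G →+ H) (P : H → Prop) :
    Nat.card {g // P (f g)} = Nat.card f.ker * Nat.card {h // h ∈ f.range ∧ P h} := by
  classical
  have := Fintype.ofFinite G
  have := Fintype.ofFinite H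
  have e : {g // P (f g)} ≃ Σ h : {h // h ∈ f.range ∧ P h}, {g // f g = h.1} :=
    { toFun := fun g => ⟨⟨f g.1, ⟨g.1, rfl⟩, g.2⟩, ⟨g.1, rfl⟩⟩
      invFun := fun x => ⟨x.2.1, by rw [x.2.2]; exact x.1.2.2⟩
      left_inv := fun g => rfl
      right_inv := by
        rintro ⟨h, ⟨g, hg⟩⟩
        obtain ⟨h, hr⟩ := h
        change f g = h at hg
        subst h
        rfl }
  rw [Nat.card_congr e, Nat.card_sigma]
  rw [Finset.sum_congr rfl (g := fun _ => Nat.card f.ker)]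
  · simp [mul_comm]
  · rintro ⟨h, ⟨g0, hg0⟩, hP⟩ _
    apply Nat.card_congr
    exact
      { toFun := fun g => ⟨g.1 - g0, by
          rw [AddMonoidHom.mem_ker, map_sub, g.2, hg0, sub_self]⟩
        invFun := fun g => ⟨g.1 + g0, by
          rw [map_add, (AddMonoidHom.mem_ker).1 g.2, hg0, zero_add]⟩
        left_inv := fun g => by simp
        right_inv := fun g => by simp }

lemma card_ker_range {G H : Type} [AddCommGroup G] [AddCommGroup H] [Finite G] [Finite H]
    (f : G →+ H) : Nat.card f.ker * Nat.card f.range = Nat.card G := by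
  have := card_pre f (fun _ => True)
  simp only [and_true] at this
  rw [← Nat.card_congr (Equiv.Set.univ G)]
  exact this.symm

lemma card_pre_surj {G H : Type} [AddCommGroup G] [AddCommGroup H] [Finite G] [Finite H]
    (f : G →+ H) (hf : Function.Surjective f) (P : H → Prop) :
    Nat.card {g // P (f g)} * Nat.card H = Nat.card G * Nat.card {h // P h} := by
  have h1 := card_pre f P
  have h2 := card_ker_range f
  have h3 : f.range = ⊤ := AddMonoidHom.range_eq_top.2 hf
  rw [h3] at h1 h2
  simp only [AddSubgroup.mem_top, true_and] at h1
  have h4 : Nat.card (⊤ : AddSubgroup H) = Nat.card H := by simp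
  rw [h4] at h2
  rw [h1, ← h2]; ring

/-- summing over the first factor -/
lemma card_prod_sub {α β : Type} [Fintype α] [Finite β] (P : α → β → Prop) :
    Nat.card {x : α × β // P x.1 x.2} = ∑ a, Nat.card {b // P a b} := by
  rw [← Nat.card_sigma]
  apply Nat.card_congr
  exact
    { toFun := fun x => ⟨x.1.1, x.1.2, x.2⟩
      invFun := fun x => ⟨(x.1, x.2.1), x.2.2⟩
      left_inv := fun x => rfl
      right_inv := fun x => rfl }

lemma card_prod_sub' {α β : Type} [Finite α] [Fintype β] (P : α → β → Prop) :
    Nat.card {x : α × β // P x.1 x.2} = ∑ b, Nat.card {a // P a b} := by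
  rw [← Nat.card_sigma]
  apply Nat.card_congr
  exact
    { toFun := fun x => ⟨x.1.2, x.1.1, x.2⟩
      invFun := fun x => ⟨(x.2.1, x.1), x.2.2⟩
      left_inv := fun x => rfl
      right_inv := fun x => rfl }

def dotHom {k : ℕ} {R : Type} [CommRing R] (y : Fin k → R) : (Fin k → R) →+ R where
  toFun z := ∑ i, y i * z i
  map_zero' := by simp
  map_add' a b := by simp [mul_add, Finset.sum_add_distrib]

lemma dot_count (k p : ℕ) [Fact p.Prime] (b : ZMod p) :
    p * Nat.card {x : (Fin k → ZMod p) × (Fin k → ZMod p) // ∑ i, x.1 i * x.2 i = b} + p ^ k =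
      p ^ (2 * k) + if b = 0 then p ^ (k + 1) else 0 := by
  classical
  rw [card_prod_sub (fun y z : Fin k → ZMod p => ∑ i, y i * z i = b)]
  have h0 : ∀ y : Fin k → ZMod p, y ≠ 0 →
      p * Nat.card {z : Fin k → ZMod p // ∑ i, y i * z i = b} = p ^ k := by
    intro y hy
    obtain ⟨j, hj⟩ := Function.ne_iff.1 hy
    have hs : Function.Surjective (dotHom y) := by
      intro c
      refine ⟨Pi.single j (c / y j), ?_⟩
      have hj' : y j ≠ 0 := hj
      simp only [dotHom, AddMonoidHom.coe_mk, ZeroHom.coe_mk]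
      rw [Finset.sum_eq_single j]
      · simp; field_simp
      · intro i _ hi; simp [Pi.single_eq_of_ne hi]
      · simp
    have := card_pre_surj (dotHom y) hs (fun c => c = b)
    have h5 : Nat.card {c : ZMod p // c = b} = 1 := by simp
    have h6 : Nat.card (Fin k → ZMod p) = p ^ k := by simp
    rw [h5, h6, Nat.card_zmod, mul_one] at this
    rw [mul_comm]
    exact this
  have h1 : p * Nat.card {z : Fin k → ZMod p // ∑ i, (0 : Fin k → ZMod p) i * z i = b} =
      if b = 0 then p ^ (k + 1) else 0 := by
    split_ifs with hb
    · subst hb; simp [pow_succ, mul_comm]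
    · have : IsEmpty {z : Fin k → ZMod p // ∑ i, (0 : Fin k → ZMod p) i * z i = b} := by
        constructor; rintro ⟨z, hz⟩; apply hb; rw [← hz]; simp
      simp only [Nat.card_of_isEmpty, mul_zero]
  rw [Finset.mul_sum, ← Finset.add_sum_erase _ _ (Finset.mem_univ (0 : Fin k → ZMod p)), h1,
    Finset.sum_congr rfl (g := fun _ => p ^ k) (fun y hy => h0 y (Finset.ne_of_mem_erase hy)),
    Finset.sum_const, Finset.card_erase_of_mem (Finset.mem_univ _)]
  have hc : Fintype.card (Fin k → ZMod p) = p ^ k := by simp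
  rw [Finset.card_univ, hc]
  have : 0 < p ^ k := pow_pos (Nat.Prime.pos Fact.out) k
  obtain ⟨q, hq⟩ : ∃ q, p ^ k = q + 1 := ⟨p ^ k - 1, by omega⟩
  rw [mul_comm 2 k, pow_mul, hq]
  simp
  ring

lemma field_count (k p : ℕ) [Fact p.Prime] (Δ a : ZMod p) :
    Nat.card {v : VV k (ZMod p) // QQ Δ v = a} + p ^ k =
      p ^ (2 * k) + p ^ k * Nat.card {x : ZMod p // Δ * x ^ 2 = a} := by
  classical
  have hp : 0 < p := Nat.Prime.pos Fact.out
  apply Nat.eq_of_mul_eq_mul_left hp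
  unfold QQ
  rw [card_prod_sub (fun (x : ZMod p) (y : (Fin k → ZMod p) × (Fin k → ZMod p)) =>
    Δ * x ^ 2 + ∑ i, y.1 i * y.2 i = a)]
  have h : ∀ x : ZMod p, p * Nat.card {y : (Fin k → ZMod p) × (Fin k → ZMod p) //
      Δ * x ^ 2 + ∑ i, y.1 i * y.2 i = a} + p ^ k =
      p ^ (2 * k) + if Δ * x ^ 2 = a then p ^ (k + 1) else 0 := by
    intro x
    have := dot_count k p (a - Δ * x ^ 2)
    simp only [sub_eq_zero, eq_comm (a := a), eq_sub_iff_add_eq'] at this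
    exact this
  have h2 := Finset.sum_congr (rfl : (Finset.univ : Finset (ZMod p)) = Finset.univ) (fun x _ => h x)
  rw [Finset.sum_add_distrib, Finset.sum_add_distrib, ← Finset.mul_sum, Finset.sum_const,
    Finset.sum_const, ← Finset.sum_filter, Finset.sum_const, Finset.card_univ, ZMod.card,
    ← Fintype.card_subtype, ← Nat.card_eq_fintype_card] at h2
  simp only [smul_eq_mul] at h2
  rw [mul_add, h2]; ring

lemma sqrt_count (p : ℕ) [Fact p.Prime] (hp2 : p ≠ 2) (Δ t : ZMod p) (hΔ : Δ ≠ 0) (ht : t ≠ 0) 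
    (ε : ℝ) (hε₁ : IsSquare Δ → ε = 1) (hε₂ : ¬ IsSquare Δ → ε = -1) :
    (Nat.card {x : ZMod p // Δ * x ^ 2 = t ^ 2} : ℝ) = 1 + ε := by
  classical
  have h := quadraticChar_card_sqrts (F := ZMod p) (by rwa [ZMod.ringChar_zmod_n]) (t ^ 2 * Δ⁻¹)
  have e : Nat.card {x : ZMod p // Δ * x ^ 2 = t ^ 2} =
      ({x | x ^ 2 = t ^ 2 * Δ⁻¹} : Set (ZMod p)).toFinset.card := by
    rw [Set.toFinset_card, ← Nat.card_eq_fintype_card]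
    apply Nat.card_congr
    apply Equiv.subtypeEquivRight
    intro x
    simp only [Set.mem_ofPred_eq]
    rw [eq_mul_inv_iff_mul_eq₀ hΔ, mul_comm]
  have hs : IsSquare (t ^ 2 * Δ⁻¹) ↔ IsSquare Δ := by
    constructor
    · rintro ⟨r, hr⟩
      have hr0 : r ≠ 0 := by
        rintro rfl
        simp [ht, hΔ] at hr
      refine ⟨t / r, ?_⟩
      field_simp at hr ⊢
      linear_combination -hr
    · rintro ⟨r, hr⟩
      have hr0 : r ≠ 0 := by
        rintro rfl
        simp [hΔ] at hr
      refine ⟨t / r, ?_⟩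
      rw [hr]; field_simp
  rw [quadraticChar_apply, quadraticCharFun] at h
  rw [if_neg (by simp [ht, hΔ])] at h
  rw [e]
  have h' : (({x | x ^ 2 = t ^ 2 * Δ⁻¹} : Set (ZMod p)).toFinset.card : ℝ) =
     ((({x | x ^ 2 = t ^ 2 * Δ⁻¹} : Set (ZMod p)).toFinset.card : ℤ) : ℝ) := by simp
  rw [h', h]
  by_cases hh : IsSquare Δ
  · rw [hε₁ hh, if_pos (hs.2 hh)]; norm_num
  · rw [hε₂ hh, if_neg (fun c => hh (hs.1 c))]; norm_num

section part2

def castV (k : ℕ) {m n : ℕ} (h : m ∣ n) : VV k (ZMod n) →+ VV k (ZMod m) where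
  toFun v := (ZMod.castHom h (ZMod m) v.1, fun i => ZMod.castHom h (ZMod m) (v.2.1 i),
    fun i => ZMod.castHom h (ZMod m) (v.2.2 i))
  map_zero' := by
    ext <;> simp
  map_add' a b := by
    ext <;> simp only [Prod.fst_add, Prod.snd_add, Pi.add_apply, map_add]

lemma castV_surj (k : ℕ) {m n : ℕ} (h : m ∣ n) : Function.Surjective (castV k h) := by
  rintro ⟨x, y, z⟩
  have hs := ZMod.castHom_surjective h
  choose g hg using hs
  refine ⟨(g x, fun i => g (y i), fun i => g (z i)), ?_⟩
  simp only [castV, AddMonoidHom.coe_mk, ZeroHom.coe_mk, hg]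

lemma QQ_castV (k : ℕ) {m n : ℕ} (h : m ∣ n) (Δ : ℤ) (v : VV k (ZMod n)) :
    QQ (Δ : ZMod m) (castV k h v) = ZMod.castHom h (ZMod m) (QQ (Δ : ZMod n) v) := by
  simp only [QQ, castV, AddMonoidHom.coe_mk, ZeroHom.coe_mk, map_add, map_mul, map_pow, map_sum,
    map_intCast]

lemma castHom_zero_iff {m n : ℕ} (h : m ∣ n) (a : ZMod n) :
    ZMod.castHom h (ZMod m) a = 0 ↔ (m : ZMod n) ∣ a := by
  obtain ⟨z, rfl⟩ := ZMod.intCast_surjective a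
  rw [map_intCast, ZMod.intCast_zmod_eq_zero_iff_dvd]
  constructor
  · rintro ⟨c, rfl⟩
    exact ⟨(c : ZMod n), by push_cast; rfl⟩
  · rintro ⟨c, hc⟩
    obtain ⟨d, rfl⟩ := ZMod.intCast_surjective c
    have : ((z - m * d : ℤ) : ZMod n) = 0 := by push_cast; rw [hc]; ring
    rw [ZMod.intCast_zmod_eq_zero_iff_dvd] at this
    have h2 : (m : ℤ) ∣ z - m * d := (Int.natCast_dvd_natCast.2 h).trans this
    exact (dvd_sub_left (Dvd.intro _ rfl)).1 h2

lemma mul_zero_iff {m n N : ℕ} (hm : 0 < m) (hN : N = n * m) (hd : n ∣ N) (a : ZMod N) :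
    (m : ZMod N) * a = 0 ↔ ZMod.castHom hd (ZMod n) a = 0 := by
  obtain ⟨z, rfl⟩ := ZMod.intCast_surjective a
  rw [map_intCast, ZMod.intCast_zmod_eq_zero_iff_dvd]
  have : (m : ZMod N) * (z : ZMod N) = ((z * m : ℤ) : ZMod N) := by
    push_cast; ring
  rw [this, ZMod.intCast_zmod_eq_zero_iff_dvd, hN]
  push_cast
  exact mul_dvd_mul_iff_right (by exact_mod_cast hm.ne')

def mulV (k : ℕ) {R : Type} [CommRing R] (c : R) : VV k R →+ VV k R where
  toFun v := (c * v.1, fun i => c * v.2.1 i, fun i => c * v.2.2 i)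
  map_zero' := by
    ext <;> simp
  map_add' a b := by
    ext <;> simp only [Prod.fst_add, Prod.snd_add, Pi.add_apply, mul_add]

/-- Nonprimitive vectors. -/
def NP {k : ℕ} {R : Type} [CommRing R] (p : ℕ) (v : VV k R) : Prop :=
  (p : R) ∣ v.1 ∧ (∀ i, (p : R) ∣ v.2.1 i) ∧ ∀ i, (p : R) ∣ v.2.2 i

lemma NP_iff {k p n : ℕ} (h : p ∣ n) (v : VV k (ZMod n)) : NP p v ↔ castV k h v = 0 := by
  simp only [NP, castV, AddMonoidHom.coe_mk, ZeroHom.coe_mk, Prod.ext_iff, funext_iff,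
    castHom_zero_iff, Prod.fst_zero, Prod.snd_zero, Pi.zero_apply]

lemma NP_iff_range {k p : ℕ} {R : Type} [CommRing R] (v : VV k R) :
    NP p v ↔ v ∈ (mulV k (p : R)).range := by
  constructor
  · rintro ⟨⟨x, hx⟩, h1, h2⟩
    choose y hy using h1
    choose z hz using h2
    exact ⟨(x, y, z), by ext <;> simp [mulV, hx, hy, hz]⟩
  · rintro ⟨s, rfl⟩
    exact ⟨⟨s.1, rfl⟩, fun i => ⟨s.2.1 i, rfl⟩, fun i => ⟨s.2.2 i, rfl⟩⟩

lemma castV_castV {k a b c : ℕ} (h1 : a ∣ b) (h2 : b ∣ c) (v : VV k (ZMod c)) :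
    castV k h1 (castV k h2 v) = castV k (h1.trans h2) v := by
  have : ∀ x : ZMod c, ZMod.castHom h1 (ZMod a) (ZMod.castHom h2 (ZMod b) x) =
      ZMod.castHom (h1.trans h2) (ZMod a) x := by
    intro x
    obtain ⟨z, rfl⟩ := ZMod.intCast_surjective x
    simp only [map_intCast]
  simp only [castV, AddMonoidHom.coe_mk, ZeroHom.coe_mk, this]

lemma NP_castV {k p m n : ℕ} (h1 : p ∣ m) (h : m ∣ n) (v : VV k (ZMod n)) :
    NP p (castV k h v) ↔ NP p v := by
  rw [NP_iff h1, NP_iff (h1.trans h), castV_castV]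

lemma card_VV (k n : ℕ) [NeZero n] : Nat.card (VV k (ZMod n)) = n ^ (2 * k + 1) := by
  simp [VV]; ring

lemma card_ker_of {G H : Type} [AddCommGroup G] [AddCommGroup H] [Finite G] [Finite H]
    (f : G →+ G) (g : G →+ H) (hg : Function.Surjective g) (h : ∀ x, x ∈ f.range ↔ g x = 0) :
    Nat.card f.ker = Nat.card H := by
  have e : f.range = g.ker := by ext x; rw [h, AddMonoidHom.mem_ker]
  have h1 := card_ker_range f
  have h2 := card_ker_range g
  rw [AddMonoidHom.range_eq_top.2 hg] at h2
  have h4 : Nat.card (⊤ : AddSubgroup H) = Nat.card H := by simp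
  rw [h4] at h2
  rw [e, ← h2, mul_comm] at h1
  exact Nat.eq_of_mul_eq_mul_left Nat.card_pos h1

/-- The differential. -/
def dQ {k : ℕ} {R : Type} [CommRing R] (Δ : R) (v : VV k R) : VV k R →+ R where
  toFun s := 2 * Δ * v.1 * s.1 + ∑ i, (v.2.1 i * s.2.2 i + v.2.2 i * s.2.1 i)
  map_zero' := by simp
  map_add' a b := by
    simp only [Prod.fst_add, Prod.snd_add, Pi.add_apply, Finset.sum_add_distrib, mul_add]
    ring

lemma QQ_add {k : ℕ} {R : Type} [CommRing R] (Δ m : R) (hm : m * m = 0) (v s : VV k R) :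
    QQ Δ (v + mulV k m s) = QQ Δ v + m * dQ Δ v s := by
  simp only [QQ, dQ, mulV, AddMonoidHom.coe_mk, ZeroHom.coe_mk, Prod.fst_add, Prod.snd_add,
    Pi.add_apply]
  have : ∀ i, (v.2.1 i + m * s.2.1 i) * (v.2.2 i + m * s.2.2 i) = v.2.1 i * v.2.2 i +
      (m * (v.2.1 i * s.2.2 i) + m * (v.2.2 i * s.2.1 i)) := by
    intro i
    linear_combination s.2.1 i * s.2.2 i * hm
  simp only [this, Finset.sum_add_distrib, ← Finset.mul_sum]
  linear_combination Δ * s.1 ^ 2 * hm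

lemma QQ_mulV {k : ℕ} {R : Type} [CommRing R] (Δ c : R) (v : VV k R) :
    QQ Δ (mulV k c v) = c ^ 2 * QQ Δ v := by
  simp only [QQ, mulV, AddMonoidHom.coe_mk, ZeroHom.coe_mk, mul_add, Finset.mul_sum]
  congr 1
  · ring
  · apply Finset.sum_congr rfl; intros; ring

lemma dQ_surj {k : ℕ} {R : Type} [CommRing R] (p : ℕ) (Δ : R) (hΔ : IsUnit (2 * Δ))
    (hu : ∀ a : R, ¬ (p : R) ∣ a → IsUnit a) (v : VV k R) (hv : ¬ NP p v) :
    Function.Surjective (dQ Δ v) := by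
  classical
  intro c
  by_cases h0 : (p : R) ∣ v.1
  · by_cases h1 : ∀ i, (p : R) ∣ v.2.1 i
    · have h2 : ¬ ∀ i, (p : R) ∣ v.2.2 i := fun h2 => hv ⟨h0, h1, h2⟩
      push Not at h2
      obtain ⟨j, hj⟩ := h2
      obtain ⟨b, hb⟩ := (hu _ hj).exists_right_inv
      refine ⟨(0, Pi.single j (b * c), 0), ?_⟩
      simp only [dQ, AddMonoidHom.coe_mk, ZeroHom.coe_mk, mul_zero, zero_add, Pi.zero_apply]
      rw [Finset.sum_eq_single j]
      · rw [Pi.single_eq_same, ← mul_assoc, hb, one_mul]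
      · intro i _ hi; simp [Pi.single_eq_of_ne hi]
      · simp
    · push Not at h1
      obtain ⟨j, hj⟩ := h1
      obtain ⟨b, hb⟩ := (hu _ hj).exists_right_inv
      refine ⟨(0, 0, Pi.single j (b * c)), ?_⟩
      simp only [dQ, AddMonoidHom.coe_mk, ZeroHom.coe_mk, mul_zero, zero_add, Pi.zero_apply,
        add_zero]
      rw [Finset.sum_eq_single j]
      · rw [Pi.single_eq_same, ← mul_assoc, hb, one_mul]
      · intro i _ hi; simp [Pi.single_eq_of_ne hi]
      · simp
  · obtain ⟨b, hb⟩ := (hΔ.mul (hu _ h0)).exists_right_inv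
    refine ⟨(b * c, 0, 0), ?_⟩
    simp only [dQ, AddMonoidHom.coe_mk, ZeroHom.coe_mk, mul_zero, add_zero, Pi.zero_apply,
      Finset.sum_const_zero]
    rw [← mul_assoc, hb, one_mul]

lemma unit_of_not_dvd (p l : ℕ) (hp : p.Prime) (a : ZMod (p ^ l)) 
    (h : ¬ (p : ZMod (p ^ l)) ∣ a) : IsUnit a := by
  have : NeZero (p ^ l) := ⟨(pow_pos hp.pos l).ne'⟩
  obtain ⟨n, rfl⟩ := ZMod.natCast_zmod_surjective (n := p ^ l) a
  rw [ZMod.isUnit_iff_coprime]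
  apply Nat.Coprime.pow_right
  rw [Nat.coprime_comm, hp.coprime_iff_not_dvd]
  rintro ⟨c, rfl⟩
  exact h ⟨c, by push_cast; rfl⟩

end part2

section part3

noncomputable def NN (k p : ℕ) (Δ a : ℤ) (l : ℕ) : ℕ :=
  Nat.card {v : VV k (ZMod (p ^ l)) // QQ (Δ : ZMod (p ^ l)) v = a}

noncomputable def AA (k p : ℕ) (Δ a : ℤ) (l : ℕ) : ℕ :=
  Nat.card {v : VV k (ZMod (p ^ l)) // ¬ NP p v ∧ QQ (Δ : ZMod (p ^ l)) v = a}

noncomputable def BB (k p : ℕ) (Δ a : ℤ) (l : ℕ) : ℕ :=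
  Nat.card {v : VV k (ZMod (p ^ l)) // NP p v ∧ QQ (Δ : ZMod (p ^ l)) v = a}

lemma NN_split (k p : ℕ) (hp : p.Prime) (Δ a : ℤ) (l : ℕ) :
    NN k p Δ a l = BB k p Δ a l + AA k p Δ a l := by
  classical
  have : NeZero (p ^ l) := ⟨(pow_pos hp.pos l).ne'⟩
  unfold NN AA BB
  rw [← Nat.card_sum]
  apply Nat.card_congr
  refine (Equiv.sumCompl (fun v : {v : VV k (ZMod (p ^ l)) // QQ (Δ : ZMod (p ^ l)) v = a} =>
    NP p v.1)).symm.trans (Equiv.sumCongr ?_ ?_)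
  · exact (Equiv.subtypeSubtypeEquivSubtypeInter _ (fun v => NP p v)).trans
      (Equiv.subtypeEquivRight (fun v => and_comm))
  · exact (Equiv.subtypeSubtypeEquivSubtypeInter _ (fun v => ¬ NP p v)).trans
      (Equiv.subtypeEquivRight (fun v => and_comm))

lemma NN_zero (k p : ℕ) (Δ a : ℤ) : NN k p Δ a 0 = 1 := by
  unfold NN
  have h : Subsingleton (ZMod (p ^ 0)) := by rw [pow_zero]; infer_instance
  rw [Nat.card_eq_one_iff_unique]
  exact ⟨inferInstance, ⟨⟨0, Subsingleton.elim _ _⟩⟩⟩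

lemma NN_one (k p : ℕ) (hp : p.Prime) (Δ a : ℤ) :
    NN k p Δ a 1 + p ^ k =
      p ^ (2 * k) + p ^ k * Nat.card {x : ZMod p // (Δ : ZMod p) * x ^ 2 = (a : ZMod p)} := by
  have := Fact.mk hp
  rw [← field_count]
  congr 1
  exact congrArg (fun m => Nat.card {v : VV k (ZMod m) // QQ (Δ : ZMod m) v = a}) (pow_one p)

lemma BB_unit (k p : ℕ) (Δ a : ℤ) (ha : ¬ (p : ℤ) ∣ a) (l : ℕ) :
    BB k p Δ a (l + 1) = 0 := by
  unfold BB
  rw [Nat.card_eq_zero]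
  left
  constructor
  rintro ⟨v, hv, hq⟩
  rw [NP_iff_range] at hv
  obtain ⟨s, rfl⟩ := hv
  rw [QQ_mulV] at hq
  have h : p ∣ p ^ (l + 1) := dvd_pow_self p (by omega)
  have h2 : ZMod.castHom h (ZMod p) ((a : ℤ) : ZMod (p ^ (l + 1))) = 0 := by
    rw [castHom_zero_iff, ← hq, pow_two, mul_assoc]
    exact Dvd.intro _ rfl
  rw [map_intCast, ZMod.intCast_zmod_eq_zero_iff_dvd] at h2
  exact ha h2

lemma BB_one (k p : ℕ) (Δ a : ℤ) (ha : (p : ℤ) ∣ a) :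
    BB k p Δ a 1 = 1 := by
  unfold BB
  have e : (p : ZMod (p ^ 1)) = 0 := by
    rw [ZMod.natCast_eq_zero_iff, pow_one]
  have ea : (a : ZMod (p ^ 1)) = 0 := by
    rw [ZMod.intCast_zmod_eq_zero_iff_dvd, pow_one]; exact ha
  have hN : ∀ v : VV k (ZMod (p ^ 1)), NP p v ↔ v = 0 := by
    intro v
    simp only [NP, e, zero_dvd_iff, Prod.ext_iff, funext_iff, Prod.fst_zero, Prod.snd_zero,
      Pi.zero_apply]
  rw [Nat.card_eq_one_iff_unique]
  refine ⟨⟨?_⟩, ⟨⟨0, (hN 0).2 rfl, by simp [QQ, ea]⟩⟩⟩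
  rintro ⟨v, hv, _⟩ ⟨w, hw, _⟩
  rw [Subtype.mk.injEq, (hN v).1 hv, (hN w).1 hw]

lemma BB_rec (k p : ℕ) (hp : p.Prime) (Δ b : ℤ) (l : ℕ) :
    BB k p Δ (p ^ 2 * b) (l + 2) = p ^ (2 * k + 1) * NN k p Δ b l := by
  have := Fact.mk hp
  have hne : ∀ j, NeZero (p ^ j) := fun j => ⟨(pow_pos hp.pos j).ne'⟩
  have h1 := card_pre (mulV k (p : ZMod (p ^ (l + 2))))
    (fun v => QQ (Δ : ZMod (p ^ (l + 2))) v = ((p ^ 2 * b : ℤ) : ZMod (p ^ (l + 2))))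
  have hpd : p ∣ p ^ (l + 2) := dvd_pow_self p (by omega)
  have hk := card_ker_of (mulV k (p : ZMod (p ^ (l + 2)))) (castV k hpd) (castV_surj k hpd)
    (fun x => by rw [← NP_iff_range, NP_iff])
  rw [hk, card_VV] at h1
  simp only [← NP_iff_range] at h1
  have hd : p ^ l ∣ p ^ (l + 2) := pow_dvd_pow p (by omega)
  have h2 := card_pre_surj (castV k hd) (castV_surj k hd)
    (fun v => QQ (Δ : ZMod (p ^ l)) v = (b : ZMod (p ^ l)))
  have h3 : ∀ v : VV k (ZMod (p ^ (l + 2))), QQ (Δ : ZMod (p ^ (l + 2))) (mulV k (p : ZMod (p ^ (l + 2))) v) =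
      ((p ^ 2 * b : ℤ) : ZMod (p ^ (l + 2))) ↔
      QQ (Δ : ZMod (p ^ l)) (castV k hd v) = (b : ZMod (p ^ l)) := by
    intro v
    rw [QQ_mulV, QQ_castV]
    have hz := mul_zero_iff (n := p ^ l) (m := p ^ 2) (pow_pos hp.pos 2) (pow_add p l 2) hd
      (QQ (Δ : ZMod (p ^ (l + 2))) v - (b : ZMod (p ^ (l + 2))))
    rw [map_sub, map_intCast, sub_eq_zero] at hz
    rw [← sub_eq_zero]
    refine Iff.trans ?_ hz
    rw [show (p : ZMod (p ^ (l + 2))) ^ 2 * QQ (Δ : ZMod (p ^ (l + 2))) v - ((p ^ 2 * b : ℤ) : ZMod (p ^ (l + 2)))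
      = ((p ^ 2 : ℕ) : ZMod (p ^ (l + 2))) * (QQ (Δ : ZMod (p ^ (l + 2))) v - (b : ZMod (p ^ (l + 2)))) by
        push_cast; ring]
  simp only [h3] at h1
  rw [h1, card_VV, card_VV] at h2
  change p ^ (2 * k + 1) * BB k p Δ (p ^ 2 * b) (l + 2) * _ = _ * NN k p Δ b l at h2
  have hpos : 0 < p ^ (2 * k + 1) * (p ^ l) ^ (2 * k + 1) := by
    have := hp.pos
    positivity
  apply Nat.eq_of_mul_eq_mul_left hpos
  rw [pow_add p l 2, mul_pow] at h2
  linear_combination h2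

lemma AA_rec (k p : ℕ) (hp : p.Prime) (hp2 : p ≠ 2) (Δ a : ℤ) (hΔ : ¬ (p : ℤ) ∣ Δ) (l : ℕ) :
    p * AA k p Δ a (l + 2) = p ^ (2 * k + 1) * AA k p Δ a (l + 1) := by
  classical
  have := Fact.mk hp
  have hne : ∀ j, NeZero (p ^ j) := fun j => ⟨(pow_pos hp.pos j).ne'⟩
  have hpd : p ∣ p ^ (l + 2) := dvd_pow_self p (by omega)
  have hpd1 : p ∣ p ^ (l + 1) := dvd_pow_self p (by omega)
  have hd : p ^ (l + 1) ∣ p ^ (l + 2) := pow_dvd_pow p (by omega)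
  set m : ZMod (p ^ (l + 2)) := ((p ^ (l + 1) : ℕ) : ZMod (p ^ (l + 2))) with hm
  have hmm : m * m = 0 := by
    rw [hm, ← Nat.cast_mul, ZMod.natCast_eq_zero_iff, ← pow_add]
    exact pow_dvd_pow p (by omega)
  have hpm : (p : ZMod (p ^ (l + 2))) ∣ m := by
    rw [hm]; exact Nat.cast_dvd_cast hpd1
  have hunit := unit_of_not_dvd p (l + 2) hp
  have h2Δ : IsUnit (2 * (Δ : ZMod (p ^ (l + 2)))) := by
    apply hunit
    rw [← castHom_zero_iff hpd, map_mul, map_intCast, map_ofNat, mul_eq_zero,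
      ZMod.intCast_zmod_eq_zero_iff_dvd]
    rintro (h | h)
    · have h' : ((2 : ℕ) : ZMod p) = 0 := by exact_mod_cast h
      rw [ZMod.natCast_eq_zero_iff, Nat.prime_dvd_prime_iff_eq hp Nat.prime_two] at h'
      exact hp2 h'
    · exact hΔ h
  have hNPs : ∀ v s : VV k (ZMod (p ^ (l + 2))), NP p (v + mulV k m s) ↔ NP p v := by
    intro v s
    simp only [NP, mulV, AddMonoidHom.coe_mk, ZeroHom.coe_mk, Prod.fst_add, Prod.snd_add,
      Pi.add_apply, dvd_add_left (hpm.mul_right _)]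
  -- double count
  have c1 := card_prod_sub' (fun v s : VV k (ZMod (p ^ (l + 2))) =>
    ¬ NP p v ∧ QQ (Δ : ZMod (p ^ (l + 2))) (v + mulV k m s) = a)
  have c2 := card_prod_sub (fun v s : VV k (ZMod (p ^ (l + 2))) =>
    ¬ NP p v ∧ QQ (Δ : ZMod (p ^ (l + 2))) (v + mulV k m s) = a)
  have d1 : ∀ s : VV k (ZMod (p ^ (l + 2))), Nat.card {v : VV k (ZMod (p ^ (l + 2))) //
      ¬ NP p v ∧ QQ (Δ : ZMod (p ^ (l + 2))) (v + mulV k m s) = a} = AA k p Δ a (l + 2) := by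
    intro s
    apply Nat.card_congr
    refine Equiv.subtypeEquiv (Equiv.addRight (mulV k m s)) ?_
    intro v
    rw [Equiv.coe_addRight, hNPs]
  have hmk : Nat.card (AddMonoidHom.mulLeft m).ker = p ^ (l + 1) := by
    rw [card_ker_of (AddMonoidHom.mulLeft m) (ZMod.castHom hd (ZMod (p ^ (l + 1)))).toAddMonoidHom
      (ZMod.castHom_surjective hd), Nat.card_zmod]
    intro x
    rw [show (ZMod.castHom hd (ZMod (p ^ (l + 1)))).toAddMonoidHom x =
      ZMod.castHom hd (ZMod (p ^ (l + 1))) x from rfl, castHom_zero_iff]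
    constructor
    · rintro ⟨r, rfl⟩; exact ⟨r, rfl⟩
    · rintro ⟨r, rfl⟩; exact ⟨r, rfl⟩
  have d2 : ∀ v : VV k (ZMod (p ^ (l + 2))), Nat.card {s : VV k (ZMod (p ^ (l + 2))) //
      ¬ NP p v ∧ QQ (Δ : ZMod (p ^ (l + 2))) (v + mulV k m s) = a} * p ^ (l + 2) =
      (p ^ (l + 2)) ^ (2 * k + 1) * p ^ (l + 1) *
        if ¬ NP p v ∧ QQ (Δ : ZMod (p ^ (l + 1))) (castV k hd v) = a then 1 else 0 := by
    intro v
    by_cases hv : NP p v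
    · simp [hv]
    simp only [hv, not_false_eq_true, true_and, QQ_add _ m hmm]
    have e1 := card_pre_surj (dQ (Δ : ZMod (p ^ (l + 2))) v) (dQ_surj p _ h2Δ hunit v hv)
      (fun r => QQ (Δ : ZMod (p ^ (l + 2))) v + m * r = a)
    have e2 := card_pre (AddMonoidHom.mulLeft m)
      (fun r => QQ (Δ : ZMod (p ^ (l + 2))) v + r = a)
    simp only [AddMonoidHom.coe_mulLeft] at e2
    rw [e2, hmk, Nat.card_zmod, card_VV] at e1
    rw [e1, mul_assoc]
    congr 2
    have e3 : QQ (Δ : ZMod (p ^ (l + 1))) (castV k hd v) = a ↔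
        m ∣ QQ (Δ : ZMod (p ^ (l + 2))) v - a := by
      rw [QQ_castV, ← sub_eq_zero, ← map_intCast (ZMod.castHom hd (ZMod (p ^ (l + 1)))) a,
        ← map_sub, castHom_zero_iff]
    rw [if_congr e3 rfl rfl]
    split_ifs with hh
    · rw [Nat.card_eq_one_iff_unique]
      refine ⟨⟨?_⟩, ⟨⟨a - QQ (Δ : ZMod (p ^ (l + 2))) v, ?_, by ring⟩⟩⟩
      · rintro ⟨x, _, hx⟩ ⟨y, _, hy⟩
        rw [Subtype.mk.injEq]
        linear_combination hx - hy
      · obtain ⟨r, hr⟩ := hh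
        refine ⟨-r, ?_⟩
        rw [AddMonoidHom.coe_mulLeft]
        linear_combination hr
    · rw [Nat.card_eq_zero]
      left
      constructor
      rintro ⟨x, ⟨r, rfl⟩, hx⟩
      rw [AddMonoidHom.coe_mulLeft] at hx
      apply hh
      exact ⟨-r, by linear_combination hx⟩
  rw [c1, Finset.sum_congr rfl (fun s _ => d1 s), Finset.sum_const, Finset.card_univ,
    ← Nat.card_eq_fintype_card, card_VV, smul_eq_mul] at c2
  have c3 := congrArg (fun x => x * p ^ (l + 2)) c2
  simp only [Finset.sum_mul] at c3
  rw [Finset.sum_congr rfl (fun v _ => d2 v), ← Finset.mul_sum, Finset.sum_boole, Nat.cast_id,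
    ← Fintype.card_subtype, ← Nat.card_eq_fintype_card] at c3
  have c4 := card_pre_surj (castV k hd) (castV_surj k hd)
    (fun v => ¬ NP p v ∧ QQ (Δ : ZMod (p ^ (l + 1))) v = a)
  simp only [NP_castV hpd1] at c4
  rw [card_VV, card_VV] at c4
  change _ = _ * AA k p Δ a (l + 1) at c4
  set K := Nat.card {v : VV k (ZMod (p ^ (l + 2))) //
    ¬ NP p v ∧ QQ (Δ : ZMod (p ^ (l + 1))) (castV k hd v) = a} with hK
  have hpp := hp.pos
  have c5 : p * AA k p Δ a (l + 2) = K := by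
    have hpos : 0 < (p ^ (l + 2)) ^ (2 * k + 1) * p ^ (l + 1) := by positivity
    apply Nat.eq_of_mul_eq_mul_left hpos
    rw [← c3]; ring
  have c6 : K = p ^ (2 * k + 1) * AA k p Δ a (l + 1) := by
    have hpos : 0 < (p ^ (l + 1)) ^ (2 * k + 1) := by positivity
    apply Nat.eq_of_mul_eq_mul_left hpos
    rw [mul_comm, c4, pow_succ p (l + 1), mul_pow]; ring
  rw [c5, c6]

end part3

section part4

def reindexV (k : ℕ) (R : Type) : (Fin (2 * k + 1) → R) ≃ VV k R where
  toFun v := (v ⟨0, by omega⟩, fun i => v ⟨2 * i + 1, by have := i.isLt; omega⟩,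
    fun i => v ⟨2 * i + 2, by have := i.isLt; omega⟩)
  invFun x := fun j => if h0 : j.1 = 0 then x.1 else
    if j.1 % 2 = 1 then x.2.1 ⟨(j.1 - 1) / 2, by have := j.isLt; omega⟩
    else x.2.2 ⟨(j.1 - 2) / 2, by have := j.isLt; omega⟩
  left_inv v := by
    funext j
    dsimp only
    split_ifs with h0 h1
    · congr 1; ext; exact h0.symm
    · congr 1; ext; simp only; omega
    · congr 1; ext; simp only; omega
  right_inv x := by
    obtain ⟨x, y, z⟩ := x
    simp only [Prod.mk.injEq]
    refine ⟨by simp, ?_, ?_⟩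
    · funext i
      rw [dif_neg (by omega), if_pos (by omega)]
      congr 1; ext; simp only; omega
    · funext i
      rw [dif_neg (by omega), if_neg (by omega)]
      congr 1; ext; simp only; omega

lemma hasSum_transfer {f g : ℕ → ℝ} {a b : ℝ} (h : HasSum g b) (hf : ∀ l, f l = g l)
    (ha : a = b) : HasSum f a := by
  rw [ha, funext hf]; exact h

lemma AA_closed (k p : ℕ) (hp : p.Prime) (hp2 : p ≠ 2) (Δ a : ℤ) (hΔ : ¬ (p : ℤ) ∣ Δ) (l : ℕ) :
    (AA k p Δ a (l + 1) : ℝ) / p ^ ((2 * k + 1) * (l + 1)) =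
      (AA k p Δ a 1 : ℝ) / p ^ (2 * k + 1) * (1 / p) ^ l := by
  have hp0 : (p : ℝ) ≠ 0 := by exact_mod_cast hp.ne_zero
  induction l with
  | zero => simp
  | succ l ih =>
    have h := AA_rec k p hp hp2 Δ a hΔ l
    have h' : (p : ℝ) * AA k p Δ a (l + 2) = p ^ (2 * k + 1) * AA k p Δ a (l + 1) := by
      exact_mod_cast h
    rw [pow_succ (1 / (p : ℝ)), ← mul_assoc, ← ih]
    rw [show (2 * k + 1) * (l + 1 + 1) = (2 * k + 1) * (l + 1) + (2 * k + 1) by ring, pow_add]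
    have h1 : (p : ℝ) ^ (2 * k + 1) ≠ 0 := pow_ne_zero _ hp0
    have h2 : (p : ℝ) ^ ((2 * k + 1) * (l + 1)) ≠ 0 := pow_ne_zero _ hp0
    rw [div_mul_div_comm, div_eq_div_iff (mul_ne_zero h2 h1) (mul_ne_zero h2 hp0)]
    linear_combination (p : ℝ) ^ ((2 * k + 1) * (l + 1)) * h'

lemma AA_sum (k p : ℕ) (hp : p.Prime) (hp2 : p ≠ 2) (Δ a : ℤ) (hΔ : ¬ (p : ℤ) ∣ Δ) 
    (z : ℝ) (hz : |z| < 1) :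
    HasSum (fun l : ℕ => z ^ (l + 1) * ((AA k p Δ a (l + 1) : ℝ) / p ^ ((2 * k + 1) * (l + 1))))
      (z * ((AA k p Δ a 1 : ℝ) / p ^ (2 * k + 1)) * (1 - z / p)⁻¹) := by
  have hp1 : (1 : ℝ) ≤ p := by exact_mod_cast hp.one_le
  have hlt : ‖z / p‖ < 1 := by
    rw [norm_div, Real.norm_eq_abs, Real.norm_eq_abs, abs_of_pos (by linarith : (0 : ℝ) < p)]
    exact lt_of_le_of_lt (div_le_self (abs_nonneg z) hp1) hz
  have := (hasSum_geometric_of_norm_lt_one hlt).mul_left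
    (z * ((AA k p Δ a 1 : ℝ) / p ^ (2 * k + 1)))
  refine hasSum_transfer this (fun l => ?_) rfl
  rw [AA_closed k p hp hp2 Δ a hΔ]
  rw [div_pow, div_pow, one_pow, pow_succ]
  ring

lemma main_sum (k p : ℕ) (hp : p.Prime) (hp2 : p ≠ 2) (Δ : ℤ) (hΔ : ¬ (p : ℤ) ∣ Δ)
    (ε : ℝ) (hε₁ : IsSquare (Δ : ZMod p) → ε = 1) (hε₂ : ¬ IsSquare (Δ : ZMod p) → ε = -1)
    (z : ℝ) (hz : |z| < 1)
    (w u : ℝ) (hw : w = z / p ^ (k + 1)) (hu : u = z ^ 2 / p ^ (2 * k + 1))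
    (t₀ : ℤ) (ht₀ : ¬ (p : ℤ) ∣ t₀) (T : ℕ) :
    HasSum (fun l : ℕ => z ^ l * ((NN k p Δ ((p ^ T * t₀) ^ 2) l : ℝ) / p ^ ((2 * k + 1) * l)))
      (((1 - w ^ 2) / ((1 - z / p) * (1 - u))) *
        (1 - ((u - ε * w) / (1 - ε * w)) * u ^ T)) := by
  have := Fact.mk hp
  have hp1 : (1 : ℝ) ≤ p := by exact_mod_cast hp.one_le
  have hp0 : (p : ℝ) ≠ 0 := by linarith
  obtain ⟨hz1, hz2⟩ := abs_lt.1 hz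
  have hsmall : ∀ y : ℝ, |y| < 1 → ∀ j : ℕ, |y / p ^ j| < 1 := by
    intro y hy j
    rw [abs_div, abs_of_pos (by positivity : (0 : ℝ) < p ^ j)]
    exact lt_of_le_of_lt (div_le_self (abs_nonneg y) (one_le_pow₀ hp1)) hy
  have hw1 : |w| < 1 := hw ▸ hsmall z hz _
  have hu1 : |u| < 1 := hu ▸ hsmall (z ^ 2) (by rw [abs_pow]; exact pow_lt_one₀ (abs_nonneg z) hz two_ne_zero) _
  have hzp1 : |z / p| < 1 := by simpa using hsmall z hz 1
  have hzp : 1 - z / p ≠ 0 := by linarith [(abs_lt.1 hzp1).2]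
  have hun : 1 - u ≠ 0 := by linarith [(abs_lt.1 hu1).2]
  have hεs : ε = 1 ∨ ε = -1 := by
    by_cases h : IsSquare (Δ : ZMod p)
    · exact Or.inl (hε₁ h)
    · exact Or.inr (hε₂ h)
  have hε2 : ε ^ 2 = 1 := by rcases hεs with h | h <;> rw [h] <;> norm_num
  have hwn : 1 - ε * w ≠ 0 := by
    rcases hεs with h | h <;> rw [h] <;> linarith [(abs_lt.1 hw1).2, (abs_lt.1 hw1).1]
  have hΔ' : (Δ : ZMod p) ≠ 0 := by
    rw [Ne, ZMod.intCast_zmod_eq_zero_iff_dvd]; exact hΔ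
  have ht' : (t₀ : ZMod p) ≠ 0 := by
    rw [Ne, ZMod.intCast_zmod_eq_zero_iff_dvd]; exact ht₀
  have hpk : (p : ℝ) ^ k ≠ 0 := pow_ne_zero _ hp0
  induction T with
  | zero =>
    rw [← hasSum_nat_add_iff' 1]
    have hA := AA_sum k p hp hp2 Δ ((p ^ 0 * t₀) ^ 2) hΔ z hz
    have hnd : ¬ (p : ℤ) ∣ (p ^ 0 * t₀) ^ 2 := by
      rw [pow_zero, one_mul]
      exact fun h => ht₀ ((Nat.prime_iff_prime_int.1 hp).dvd_of_dvd_pow h)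
    have hNA : ∀ l, NN k p Δ ((p ^ 0 * t₀) ^ 2) (l + 1) = AA k p Δ ((p ^ 0 * t₀) ^ 2) (l + 1) := by
      intro l
      rw [NN_split k p hp, BB_unit k p Δ _ hnd, zero_add]
    have hN1 := NN_one k p hp Δ ((p ^ 0 * t₀) ^ 2)
    have hc := sqrt_count p hp2 (Δ : ZMod p) (t₀ : ZMod p) hΔ' ht' ε hε₁ hε₂
    have hN1' : (AA k p Δ ((p ^ 0 * t₀) ^ 2) 1 : ℝ) + p ^ k = p ^ (2 * k) + p ^ k * (1 + ε) := by
      rw [← hc, ← hNA 0]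
      rw [show (((p ^ 0 * t₀) ^ 2 : ℤ) : ZMod p) = (t₀ : ZMod p) ^ 2 by push_cast; ring] at hN1
      exact_mod_cast hN1
    have hA1 : (AA k p Δ ((p ^ 0 * t₀) ^ 2) 1 : ℝ) = p ^ (2 * k) + p ^ k * ε := by
      linear_combination hN1'
    simp only [hNA, Finset.range_one, Finset.sum_singleton, NN_zero]
    refine hasSum_transfer hA (fun l => rfl) ?_
    rw [hA1]
    have hz' : z = p ^ k * p * w := by rw [hw, pow_succ]; field_simp
    have e1 : z * (((p : ℝ) ^ (2 * k) + p ^ k * ε) / p ^ (2 * k + 1)) = z / p + ε * w := by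
      rw [hw, pow_succ, pow_succ, mul_comm 2 k, pow_mul]; field_simp
    rw [e1]
    have e2 : 1 - (u - ε * w) / (1 - ε * w) * u ^ 0 = (1 - u) / (1 - ε * w) := by
      rw [pow_zero, mul_one, eq_div_iff hwn, sub_mul, div_mul_cancel₀ _ hwn]; ring
    rw [e2]
    have e3 : 1 - w ^ 2 = (1 + ε * w) * (1 - ε * w) := by linear_combination w ^ 2 * hε2
    rw [e3]
    generalize z / (p : ℝ) = y at *
    field_simp
    norm_num
    ring
  | succ T ih =>
    rw [← hasSum_nat_add_iff' 1]
    have ha : (((p : ℤ) ^ (T + 1) * t₀) ^ 2) = p ^ 2 * (p ^ T * t₀) ^ 2 := by ring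
    rw [ha]
    have hd : (p : ℤ) ∣ p ^ 2 * (p ^ T * t₀) ^ 2 := Dvd.dvd.mul_right (dvd_pow_self _ two_ne_zero) _
    have hA := AA_sum k p hp hp2 Δ (p ^ 2 * (p ^ T * t₀) ^ 2) hΔ z hz
    have hN1 := NN_one k p hp Δ (p ^ 2 * (p ^ T * t₀) ^ 2)
    have hS : Nat.card {x : ZMod p // (Δ : ZMod p) * x ^ 2 = ((p ^ 2 * (p ^ T * t₀) ^ 2 : ℤ) : ZMod p)} = 1 := by
      rw [(ZMod.intCast_zmod_eq_zero_iff_dvd _ p).2 hd]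
      simp [hΔ']
    rw [hS, mul_one, add_left_inj, NN_split k p hp, BB_one k p Δ _ hd] at hN1
    have hA1 : (AA k p Δ (p ^ 2 * (p ^ T * t₀) ^ 2) 1 : ℝ) = p ^ (2 * k) - 1 := by
      have : (1 : ℝ) + AA k p Δ (p ^ 2 * (p ^ T * t₀) ^ 2) 1 = p ^ (2 * k) := by exact_mod_cast hN1
      linear_combination this
    have hB : HasSum (fun l : ℕ => z ^ (l + 1) *
        ((BB k p Δ (p ^ 2 * (p ^ T * t₀) ^ 2) (l + 1) : ℝ) / p ^ ((2 * k + 1) * (l + 1))))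
        (u * (((1 - w ^ 2) / ((1 - z / p) * (1 - u))) *
          (1 - ((u - ε * w) / (1 - ε * w)) * u ^ T)) + z / p ^ (2 * k + 1)) := by
      rw [← hasSum_nat_add_iff' 1]
      simp only [Finset.range_one, Finset.sum_singleton, zero_add, BB_one k p Δ _ hd,
        Nat.cast_one, pow_one, mul_one, mul_one_div, add_sub_cancel_right]
      refine hasSum_transfer (ih.mul_left u) (fun l => ?_) rfl
      rw [BB_rec k p hp, hu]
      push_cast
      rw [show (2 * k + 1) * (l + 1 + 1) = (2 * k + 1) * l + (2 * k + 1) + (2 * k + 1) by ring,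
        pow_add (p : ℝ) ((2 * k + 1) * l + (2 * k + 1)), pow_add (p : ℝ) ((2 * k + 1) * l)]
      have h1 : (p : ℝ) ^ (2 * k + 1) ≠ 0 := pow_ne_zero _ hp0
      have h2 : (p : ℝ) ^ ((2 * k + 1) * l) ≠ 0 := pow_ne_zero _ hp0
      generalize (p : ℝ) ^ (2 * k + 1) = P at *
      generalize (p : ℝ) ^ ((2 * k + 1) * l) = P' at *
      field_simp
      try ring
    have hAB := hB.add hA
    have hf : ∀ l : ℕ, z ^ (l + 1) * ((NN k p Δ (p ^ 2 * (p ^ T * t₀) ^ 2) (l + 1) : ℝ) / p ^ ((2 * k + 1) * (l + 1)))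
      = z ^ (l + 1) *
        ((BB k p Δ (p ^ 2 * (p ^ T * t₀) ^ 2) (l + 1) : ℝ) / p ^ ((2 * k + 1) * (l + 1))) +
        z ^ (l + 1) *
        ((AA k p Δ (p ^ 2 * (p ^ T * t₀) ^ 2) (l + 1) : ℝ) / p ^ ((2 * k + 1) * (l + 1))) := by
      intro l
      rw [NN_split k p hp]; push_cast; ring
    simp only [hf, Finset.range_one, Finset.sum_singleton, NN_zero]
    refine hasSum_transfer hAB (fun l => rfl) ?_
    rw [hA1]
    have e1 : z * (((p : ℝ) ^ (2 * k) - 1) / p ^ (2 * k + 1)) = z / p - z / p ^ (2 * k + 1) := by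
      rw [pow_succ]; field_simp
    have e2 : w ^ 2 = z / p * (z / p ^ (2 * k + 1)) := by
      rw [hw, pow_succ (p : ℝ) k, pow_succ (p : ℝ) (2 * k), mul_comm 2 k, pow_mul]; field_simp
    rw [e1, e2, pow_succ]
    generalize (u - ε * w) / (1 - ε * w) = c at *
    generalize z / (p : ℝ) ^ (2 * k + 1) = x at *
    generalize z / (p : ℝ) = y at *
    norm_num
    field_simp
    ring

end part4


open Classical in
theorem stmt_14 (p : ℕ) (hp : p.Prime) (hp2 : p ≠ 2) (Δ : ℤ) (hΔ : ¬ (p : ℤ) ∣ Δ)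
    (ε : ℝ) (hε : ε = if IsSquare (Δ : ZMod p) then 1 else -1) (k : ℕ)
    (t : ℤ) (ht : t ≠ 0) (T : ℕ) (hT : padicValInt p t = T)
    (z : ℝ) (hz : |z| < 1)
    (w u : ℝ) (hw : w = z / p ^ (k + 1)) (hu : u = z ^ 2 / p ^ (2 * k + 1)) :
    HasSum
      (fun ℓ : ℕ => z ^ ℓ *
        ((Nat.card {v : Fin (2 * k + 1) → ZMod (p ^ ℓ) //
            (Δ : ZMod (p ^ ℓ)) * v ⟨0, by omega⟩ ^ 2 +
              ∑ i : Fin k, v ⟨2 * i + 1, by have := i.isLt; omega⟩ *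
                v ⟨2 * i + 2, by have := i.isLt; omega⟩
              = (t : ZMod (p ^ ℓ)) ^ 2} : ℝ) / p ^ ((2 * k + 1) * ℓ)))
      (((1 - w ^ 2) / ((1 - z / p) * (1 - u))) *
        (1 - ((u - ε * w) / (1 - ε * w)) * u ^ T)) := by
  have hp1 : p ≠ 1 := hp.one_lt.ne'
  have := Fact.mk hp
  have hdvd : (p : ℤ) ^ T ∣ t := by
    rw [padicValInt_dvd_iff]; right; exact hT.ge
  obtain ⟨t₀, rfl⟩ := hdvd
  have ht₀ : ¬ (p : ℤ) ∣ t₀ := by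
    rintro ⟨c, rfl⟩
    have h : (p : ℤ) ^ (T + 1) ∣ p ^ T * (p * c) := ⟨c, by ring⟩
    rw [padicValInt_dvd_iff] at h
    rcases h with h | h
    · exact ht h
    · omega
  have hmain := main_sum k p hp hp2 Δ hΔ ε (fun h => by rw [hε, if_pos h])
    (fun h => by rw [hε, if_neg h]) z hz w u hw hu t₀ ht₀ T
  refine hasSum_transfer hmain (fun l => ?_) rfl
  congr 3
  unfold NN
  apply Nat.card_congr
  refine Equiv.subtypeEquiv (reindexV k (ZMod (p ^ l))) ?_
  intro v
  simp only [QQ, reindexV, Equiv.coe_fn_mk, Int.cast_pow]
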